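/- Let l_1, m_1, l_2, m_2, k be positive integers with l_1 ≤ m_1 < l_2 ≤ m_2. Then f_k([l_1,m_1] ∪ [l_2,m_2]) = Σ_{d=1}^{m_2} μ(d) · C(⌊m_1/d⌋ + ⌊m_2/d⌋ − ⌊(l_1−1)/d⌋ − ⌊(l_2−1)/d⌋, k), where C(·,·) denotes the binomial coefficient. -/

import Mathlib

/-!
By `∑_{d ∣ n} μ(d) = [n = 1]`, the number of `k`-subsets `X` of `A` with `gcd X = 1` is
`∑_d μ(d) · #{X : d ∣ gcd X}`. Now `d ∣ gcd X` says that every element of `X` is a multiple of `d`,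
so the inner count is a binomial coefficient in the number of multiples of `d` lying in `A`; for an
interval that number is a difference of two floors.
-/

section

open Finset ArithmeticFunction

variable {ι : Type*}

theorem sum_divisors_moebius (n : ℕ) :
    ∑ d ∈ n.divisors, moebius d = if n = 1 then 1 else 0 := by
  rw [← coe_zeta_mul_apply, coe_zeta_mul_moebius, one_apply]

theorem card_filter_eq_one_eq_sum_moebius {s : Finset ι} {f : ι → ℕ} {N : ℕ}
    (hf : ∀ i ∈ s, f i ∈ Icc 1 N) :
    (#{i ∈ s | f i = 1} : ℤ) = ∑ d ∈ Icc 1 N, moebius d * #{i ∈ s | d ∣ f i} := by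
  have filter_dvd_Icc : ∀ i ∈ s, {d ∈ Icc 1 N | d ∣ f i} = (f i).divisors := by
    intro i hi
    obtain ⟨hpos, hle⟩ := mem_Icc.mp (hf i hi)
    ext d
    simp only [mem_filter, mem_Icc, Nat.mem_divisors]
    constructor
    · rintro ⟨-, hdvd⟩
      exact ⟨hdvd, Nat.ne_of_gt hpos⟩
    · rintro ⟨hdvd, -⟩
      exact ⟨⟨Nat.pos_of_dvd_of_pos hdvd hpos, (Nat.le_of_dvd hpos hdvd).trans hle⟩, hdvd⟩
  calc (#{i ∈ s | f i = 1} : ℤ)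
      = ∑ i ∈ s, ∑ d ∈ (f i).divisors, moebius d := by
        simp only [sum_divisors_moebius, sum_boole]
    _ = ∑ i ∈ s, ∑ d ∈ Icc 1 N, if d ∣ f i then moebius d else 0 :=
        sum_congr rfl fun i hi => by rw [← filter_dvd_Icc i hi, sum_filter]
    _ = ∑ d ∈ Icc 1 N, moebius d * #{i ∈ s | d ∣ f i} := by
        rw [sum_comm]
        simp only [← sum_filter, sum_const, nsmul_eq_mul, mul_comm]

theorem filter_powersetCard_forall_mem (s : Finset ι) (p : ι → Prop) [DecidablePred p] (k : ℕ) :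
    {t ∈ s.powersetCard k | ∀ i ∈ t, p i} = {i ∈ s | p i}.powersetCard k := by
  ext t
  simp only [mem_filter, mem_powersetCard, subset_iff]
  grind

theorem card_filter_powersetCard_dvd_gcd {α : Type*} [CommMonoidWithZero α]
    [NormalizedGCDMonoid α] [DecidableRel ((· ∣ ·) : α → α → Prop)]
    (s : Finset ι) (f : ι → α) (k : ℕ) (d : α) :
    #{t ∈ s.powersetCard k | d ∣ t.gcd f} = (#{i ∈ s | d ∣ f i}).choose k := by
  simp only [Finset.dvd_gcd_iff, filter_powersetCard_forall_mem, card_powersetCard]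

theorem gcd_mem_Icc_one_of_mem {t : Finset ι} {f : ι → ℕ} {N : ℕ} {i : ι} (hi : i ∈ t)
    (hfi : f i ∈ Icc 1 N) : t.gcd f ∈ Icc 1 N := by
  obtain ⟨hpos, hle⟩ := mem_Icc.mp hfi
  have hdvd : t.gcd f ∣ f i := gcd_dvd hi
  exact mem_Icc.mpr ⟨Nat.pos_of_dvd_of_pos hdvd hpos, (Nat.le_of_dvd hpos hdvd).trans hle⟩

theorem card_filter_powersetCard_gcd_eq_one {s : Finset ι} {f : ι → ℕ} {N k : ℕ}
    (hf : ∀ i ∈ s, f i ∈ Icc 1 N) (hk : 0 < k) :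
    (#{t ∈ s.powersetCard k | t.gcd f = 1} : ℤ)
      = ∑ d ∈ Icc 1 N, moebius d * (#{i ∈ s | d ∣ f i}).choose k := by
  have gcd_mem : ∀ t ∈ s.powersetCard k, t.gcd f ∈ Icc 1 N := by
    intro t ht
    obtain ⟨hts, rfl⟩ := mem_powersetCard.mp ht
    obtain ⟨i, hi⟩ := card_pos.mp hk
    exact gcd_mem_Icc_one_of_mem hi (hf i (hts hi))
  simp only [card_filter_eq_one_eq_sum_moebius gcd_mem, card_filter_powersetCard_dvd_gcd]

theorem card_filter_dvd_Ioc (a b d : ℕ) : #{x ∈ Ioc a b | d ∣ x} = b / d - a / d := by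
  rcases le_total a b with hab | hba
  · have hdisj : Disjoint {x ∈ Ioc 0 a | d ∣ x} {x ∈ Ioc a b | d ∣ x} :=
      disjoint_filter_filter (Ioc_disjoint_Ioc_of_le le_rfl)
    rw [← Nat.Ioc_filter_dvd_card_eq_div b, ← Nat.Ioc_filter_dvd_card_eq_div a,
      ← Ioc_union_Ioc_eq_Ioc (Nat.zero_le a) hab, filter_union, card_union_of_disjoint hdisj,
      Nat.add_sub_cancel_left]
  · rw [Ioc_eq_empty_of_le hba, filter_empty, card_empty,
      Nat.sub_eq_zero_of_le (Nat.div_le_div_right hba)]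

theorem card_filter_dvd_Icc {l : ℕ} (hl : 0 < l) (m d : ℕ) :
    #{x ∈ Icc l m | d ∣ x} = m / d - (l - 1) / d := by
  rw [← card_filter_dvd_Ioc, Ioc_sub_one_left_eq_Icc_of_not_isMin (not_isMin_of_lt hl)]

theorem card_filter_dvd_Icc_union_Icc {l₁ m₁ l₂ m₂ : ℕ} (hl₁ : 0 < l₁)
    (h₁ : l₁ ≤ m₁) (h₂ : m₁ < l₂) (h₃ : l₂ ≤ m₂) (d : ℕ) :
    #{x ∈ Icc l₁ m₁ ∪ Icc l₂ m₂ | d ∣ x}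
      = m₁ / d + m₂ / d - (l₁ - 1) / d - (l₂ - 1) / d := by
  have hdisj : Disjoint (Icc l₁ m₁) (Icc l₂ m₂) := by
    simp only [disjoint_left, mem_Icc]
    omega
  have hle₁ : (l₁ - 1) / d ≤ m₁ / d := Nat.div_le_div_right (by omega)
  have hle₂ : (l₂ - 1) / d ≤ m₂ / d := Nat.div_le_div_right (by omega)
  rw [filter_union, card_union_of_disjoint (disjoint_filter_filter hdisj),
    card_filter_dvd_Icc hl₁, card_filter_dvd_Icc (by omega)]
  omega

end

/-- Main theorem (b): `f_k([l₁,m₁] ∪ [l₂,m₂]) =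
∑_{d=1}^{m₂} μ(d) C(⌊m₁/d⌋ + ⌊m₂/d⌋ - ⌊(l₁-1)/d⌋ - ⌊(l₂-1)/d⌋, k)`, where
`f_k(A)` counts the `k`-element relatively prime subsets of `A`. -/
theorem stmt_10 (l₁ m₁ l₂ m₂ k : ℕ) (hl₁ : 0 < l₁) (hk : 0 < k)
    (h₁ : l₁ ≤ m₁) (h₂ : m₁ < l₂) (h₃ : l₂ ≤ m₂) :
    ((((Finset.Icc l₁ m₁ ∪ Finset.Icc l₂ m₂).powerset).filter
        (fun X : Finset ℕ => X.card = k ∧ X.gcd id = 1)).card : ℤ)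
      = ∑ d ∈ Finset.Icc 1 m₂,
          (ArithmeticFunction.moebius d) *
            (Nat.choose (m₁ / d + m₂ / d - (l₁ - 1) / d - (l₂ - 1) / d) k) := by
  have mem_Icc_one : ∀ x ∈ Finset.Icc l₁ m₁ ∪ Finset.Icc l₂ m₂, id x ∈ Finset.Icc 1 m₂ := by
    simp only [Finset.mem_union, Finset.mem_Icc, id]
    omega
  rw [← Finset.filter_filter, ← Finset.powersetCard_eq_filter,
    card_filter_powersetCard_gcd_eq_one mem_Icc_one hk]
  simp only [id, card_filter_dvd_Icc_union_Icc hl₁ h₁ h₂ h₃]
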